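/- Let u ∈ 𝓗₀¹(Ω) and set u⁺ = max(u,0), u⁻ = −min(u,0). Then: (1) the weak derivatives satisfy ∂ₓ(u⁺) = ∂ₓu a.e. on {u > 0} and ∂ₓ(u⁺) = 0 a.e. on {u ≤ 0}, ∂ₓ(u⁻) = −∂ₓu a.e. on {u < 0} and ∂ₓ(u⁻) = 0 a.e. on {u ≥ 0}, and the analogous formulas hold for ∂_y; (2) the weak gradient of u vanishes a.e. on the set {u = 0}; (3) u⁺, u⁻ and |u| all belong to 𝓗₀¹(Ω). -/

import Mathlib

open MeasureTheory Set Filter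

noncomputable section

/-- The open unit square `Ω = (0,1) × (0,1)` in `ℝ²`. -/
def Omega : Set (ℝ × ℝ) := Ioo (0:ℝ) 1 ×ˢ Ioo (0:ℝ) 1

/-- Test functions on a set `s`: smooth with compact support contained in `s`. -/
def IsTestOn (s : Set (ℝ × ℝ)) (φ : ℝ × ℝ → ℝ) : Prop :=
  ContDiff ℝ (⊤ : ℕ∞) φ ∧ HasCompactSupport φ ∧ tsupport φ ⊆ s

/-- Classical partial derivative in the `x`-direction. -/
def pdx (φ : ℝ × ℝ → ℝ) (p : ℝ × ℝ) : ℝ := fderiv ℝ φ p (1, 0)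

/-- Classical partial derivative in the `y`-direction. -/
def pdy (φ : ℝ × ℝ → ℝ) (p : ℝ × ℝ) : ℝ := fderiv ℝ φ p (0, 1)

/-- `g` is a weak `x`-partial derivative of `u` on `s`. -/
def HasWeakDerivXOn (s : Set (ℝ × ℝ)) (u g : ℝ × ℝ → ℝ) : Prop :=
  LocallyIntegrableOn u s volume ∧ LocallyIntegrableOn g s volume ∧
  ∀ φ : ℝ × ℝ → ℝ, IsTestOn s φ →
    ∫ p in s, u p * pdx φ p = - ∫ p in s, g p * φ p

/-- `g` is a weak `y`-partial derivative of `u` on `s`. -/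
def HasWeakDerivYOn (s : Set (ℝ × ℝ)) (u g : ℝ × ℝ → ℝ) : Prop :=
  LocallyIntegrableOn u s volume ∧ LocallyIntegrableOn g s volume ∧
  ∀ φ : ℝ × ℝ → ℝ, IsTestOn s φ →
    ∫ p in s, u p * pdy φ p = - ∫ p in s, g p * φ p

/-- Test functions on `Ω`. -/
def IsTest (φ : ℝ × ℝ → ℝ) : Prop := IsTestOn Omega φ

/-- Membership in the weighted Sobolev space `𝓗¹(Ω)`, with weak derivatives `gx, gy`:
`u ∈ L²(Ω)`, `gx = ∂ₓu`, `gy = ∂_y u` weakly, and `y^α₁ gx, x^α₂ gy ∈ L²(Ω)`. -/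
structure MemH1 (α₁ α₂ : ℝ) (u gx gy : ℝ × ℝ → ℝ) : Prop where
  memL2 : MemLp u 2 (volume.restrict Omega)
  weakX : HasWeakDerivXOn Omega u gx
  weakY : HasWeakDerivYOn Omega u gy
  wgx : MemLp (fun p => p.2 ^ α₁ * gx p) 2 (volume.restrict Omega)
  wgy : MemLp (fun p => p.1 ^ α₂ * gy p) 2 (volume.restrict Omega)

/-- The `𝓗¹(Ω)` norm of `u` (with weak derivatives `gx, gy`). -/
def H1Norm (α₁ α₂ : ℝ) (u gx gy : ℝ × ℝ → ℝ) : ℝ :=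
  Real.sqrt ((∫ p in Omega, (u p) ^ 2) +
    (∫ p in Omega, (p.2 ^ α₁ * gx p) ^ 2) +
    (∫ p in Omega, (p.1 ^ α₂ * gy p) ^ 2))

/-- Membership in `𝓗₀¹(Ω)`: member of `𝓗¹(Ω)` approximable in the `𝓗¹` norm by
test functions. -/
def MemH10 (α₁ α₂ : ℝ) (u gx gy : ℝ × ℝ → ℝ) : Prop :=
  MemH1 α₁ α₂ u gx gy ∧
  ∀ ε : ℝ, 0 < ε → ∃ φ : ℝ × ℝ → ℝ, IsTest φ ∧
    H1Norm α₁ α₂ (fun p => u p - φ p) (fun p => gx p - pdx φ p)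
      (fun p => gy p - pdy φ p) < ε

/-- Membership in `H₀(Ω) = {u ∈ 𝓗₀¹(Ω) : ∫_Ω V u² < ∞}`. -/
def MemH0 (α₁ α₂ : ℝ) (V u gx gy : ℝ × ℝ → ℝ) : Prop :=
  MemH10 α₁ α₂ u gx gy ∧
  IntegrableOn (fun p => V p * (u p) ^ 2) Omega volume

/-- The bilinear form `a(u,v)` associated with the sub-elliptic operator with potential `V`. -/
def aForm (α₁ α₂ : ℝ) (V u gx gy v hx hy : ℝ × ℝ → ℝ) : ℝ :=
  ∫ p in Omega, ((p.2 ^ α₁ * gx p) * (p.2 ^ α₁ * hx p) +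
    (p.1 ^ α₂ * gy p) * (p.1 ^ α₂ * hy p) + V p * u p * v p)

/-- The bilinear form `a₁(u,v)` (no potential). -/
def a1Form (α₁ α₂ : ℝ) (u gx gy v hx hy : ℝ × ℝ → ℝ) : ℝ :=
  ∫ p in Omega, ((p.2 ^ α₁ * gx p) * (p.2 ^ α₁ * hx p) +
    (p.1 ^ α₂ * gy p) * (p.1 ^ α₂ * hy p))

/-- Membership in `S_p = {V ∈ L^p(Ω) : V ≥ 0 a.e., ‖V‖_{L^p(Ω)} ≤ M}`. -/
def MemSp (ppow M : ℝ) (V : ℝ × ℝ → ℝ) : Prop :=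
  MemLp V (ENNReal.ofReal ppow) (volume.restrict Omega) ∧
  (∀ᵐ p ∂(volume.restrict Omega), 0 ≤ V p) ∧
  eLpNorm V (ENNReal.ofReal ppow) (volume.restrict Omega) ≤ ENNReal.ofReal M

/-- `u` (with weak derivatives `gx, gy`) is an eigenfunction of the sub-elliptic operator
with potential `V` for the eigenvalue `lam`. -/
def IsEigenfun (α₁ α₂ : ℝ) (V : ℝ × ℝ → ℝ) (lam : ℝ) (u gx gy : ℝ × ℝ → ℝ) : Prop :=
  MemH0 α₁ α₂ V u gx gy ∧
  ∀ v hx hy : ℝ × ℝ → ℝ, MemH0 α₁ α₂ V v hx hy →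
    aForm α₁ α₂ V u gx gy v hx hy = lam * ∫ p in Omega, u p * v p

/-- The first eigenvalue `λ₁(V) = inf { a(u,u) : u ∈ H₀(Ω), ‖u‖_{L²} = 1 }`. -/
def lam1 (α₁ α₂ : ℝ) (V : ℝ × ℝ → ℝ) : ℝ :=
  sInf { r | ∃ u gx gy : ℝ × ℝ → ℝ, MemH0 α₁ α₂ V u gx gy ∧
    (∫ p in Omega, (u p) ^ 2) = 1 ∧ r = aForm α₁ α₂ V u gx gy u gx gy }

/-- `sup { a(u,u) : u ∈ span(φ), ‖u‖_{L²(Ω)} = 1 }` for a finite family `φ` with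
weak derivatives `φx, φy`. -/
def rayleighSup (α₁ α₂ : ℝ) (V : ℝ × ℝ → ℝ) {k : ℕ} (φ φx φy : Fin k → ℝ × ℝ → ℝ) : ℝ :=
  sSup { s | ∃ c : Fin k → ℝ,
    (∫ p in Omega, (∑ i, c i * φ i p) ^ 2) = 1 ∧
    s = aForm α₁ α₂ V (fun p => ∑ i, c i * φ i p) (fun p => ∑ i, c i * φx i p)
      (fun p => ∑ i, c i * φy i p) (fun p => ∑ i, c i * φ i p)
      (fun p => ∑ i, c i * φx i p) (fun p => ∑ i, c i * φy i p) }

/-- The set of values `sup { a(u,u) : u ∈ E, ‖u‖ = 1 }` over `k`-dimensional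
subspaces `E` of `H₀(Ω)` (represented by `L²(Ω)`-linearly independent families of
`k` elements of `H₀(Ω)`). -/
def minmaxSet (α₁ α₂ : ℝ) (V : ℝ × ℝ → ℝ) (k : ℕ) : Set ℝ :=
  { r | ∃ φ φx φy : Fin k → ℝ × ℝ → ℝ,
      (∀ i, MemH0 α₁ α₂ V (φ i) (φx i) (φy i)) ∧
      (∀ c : Fin k → ℝ, (∀ᵐ p ∂(volume.restrict Omega), ∑ i, c i * φ i p = 0) → c = 0) ∧
      r = rayleighSup α₁ α₂ V φ φx φy }

/-- The `k`-th eigenvalue via the min-max principle. -/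
def lamk (α₁ α₂ : ℝ) (V : ℝ × ℝ → ℝ) (k : ℕ) : ℝ := sInf (minmaxSet α₁ α₂ V k)

/-- Membership in `U = (𝓗₀¹(Ω) ∩ L^{2q}(Ω)) \ {0}`. -/
def MemU (α₁ α₂ qe : ℝ) (u gx gy : ℝ × ℝ → ℝ) : Prop :=
  MemH10 α₁ α₂ u gx gy ∧
  MemLp u (ENNReal.ofReal (2 * qe)) (volume.restrict Omega) ∧
  ¬ (∀ᵐ p ∂(volume.restrict Omega), u p = 0)

/-- The functional `J(u) = (a₁(u,u) + M ‖u‖_{L^{2q}(Ω)}²) / ‖u‖_{L²(Ω)}²`. -/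
def Jfun (α₁ α₂ M qe : ℝ) (u gx gy : ℝ × ℝ → ℝ) : ℝ :=
  (a1Form α₁ α₂ u gx gy u gx gy +
    M * (∫ p in Omega, |u p| ^ (2 * qe)) ^ (1 / qe)) / (∫ p in Omega, (u p) ^ 2)

/-! An element of `𝓗₀¹(Ω)` is an `L²` limit of jets `(φ, (Xᵢ φ)ᵢ)` of test functions `φ`, where
`X₁ = y ^ α₁ ∂ₓ` and `X₂ = x ^ α₂ ∂_y`. For `f` smooth and bounded, with primitive `F(t) = ∫₀ᵗ f`,
the chain rule map `(u, g) ↦ (F ∘ u, f(u) g)` is continuous on `L²` and sends jets of test functions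
to jets of test functions, so it preserves their closure `𝓗₀¹(Ω)`. The closure being closed,
dominated convergence extends this to pointwise limits of uniformly bounded smooth `f`, among which
is the indicator function of `(0, ∞)`: it gives `u⁺`, hence `u⁻ = (-u)⁺` and `|u| = u⁺ + u⁻`.
Finally `u⁺ - u⁻ - u = 0`, so its jet vanishes by uniqueness of weak derivatives, and on `{u = 0}`
this jet is minus that of `u`. -/

section LpChainRule

open Topology
open scoped ENNReal NNReal

variable {α : Type*} [MeasurableSpace α] {μ : Measure α} {p : ℝ≥0∞} {ι : Type*}
  {f : ℝ → ℝ} {C : ℝ≥0}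

theorem intervalIntegrable_of_measurable_of_norm_le (hf : Measurable f) (hC : ∀ t, ‖f t‖ ≤ C)
    (a b : ℝ) : IntervalIntegrable f volume a b :=
  (intervalIntegrable_const (c := (C : ℝ))).mono_fun hf.aestronglyMeasurable <|
    .of_forall fun t => (hC t).trans (le_abs_self _)

theorem lipschitzWith_intervalIntegral (hf : Measurable f) (hC : ∀ t, ‖f t‖ ≤ C) (a : ℝ) :
    LipschitzWith C fun t => ∫ s in a..t, f s := by
  refine .of_dist_le_mul fun s t => ?_
  have hint := intervalIntegrable_of_measurable_of_norm_le hf hC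
  rw [Real.dist_eq, Real.dist_eq, intervalIntegral.integral_interval_sub_left (hint _ _) (hint _ _)]
  exact intervalIntegral.norm_integral_le_of_norm_le_const fun r _ => hC r

theorem memLp_comp_mul (hf : Measurable f) (hC : ∀ t, ‖f t‖ ≤ C) (u g : Lp ℝ p μ) :
    MemLp (fun x => f (u x) * g x) p μ :=
  (Lp.memLp g).of_le_mul
    ((hf.comp_aemeasurable (Lp.aestronglyMeasurable u).aemeasurable).aestronglyMeasurable.mul
      (Lp.aestronglyMeasurable g))
    (.of_forall fun x => by rw [norm_mul]; gcongr; exact hC _)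

/-- The function `f(u) g`, as an element of `L^p`, for `u, g ∈ L^p` and `f` bounded. -/
def compMulLp (hf : Measurable f) (hC : ∀ t, ‖f t‖ ≤ C) (u g : Lp ℝ p μ) : Lp ℝ p μ :=
  (memLp_comp_mul hf hC u g).toLp

theorem coeFn_compMulLp (hf : Measurable f) (hC : ∀ t, ‖f t‖ ≤ C) (u g : Lp ℝ p μ) :
    compMulLp hf hC u g =ᵐ[μ] fun x => f (u x) * g x :=
  MemLp.coeFn_toLp _

theorem norm_coeFn_compMulLp_le (hf : Measurable f) (hC : ∀ t, ‖f t‖ ≤ C) (u g : Lp ℝ p μ) :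
    ∀ᵐ x ∂μ, ‖compMulLp hf hC u g x‖ ≤ C * ‖g x‖ := by
  filter_upwards [coeFn_compMulLp hf hC u g] with x hx
  rw [hx, norm_mul]
  gcongr
  exact hC _

theorem norm_compMulLp_le (hf : Measurable f) (hC : ∀ t, ‖f t‖ ≤ C) (u g : Lp ℝ p μ) :
    ‖compMulLp hf hC u g‖ ≤ C * ‖g‖ :=
  Lp.norm_le_mul_norm_of_ae_le_mul (norm_coeFn_compMulLp_le hf hC u g)

theorem compMulLp_add (hf : Measurable f) (hC : ∀ t, ‖f t‖ ≤ C) (u g h : Lp ℝ p μ) :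
    compMulLp hf hC u (g + h) = compMulLp hf hC u g + compMulLp hf hC u h := by
  refine Lp.ext ?_
  filter_upwards [coeFn_compMulLp hf hC u (g + h), coeFn_compMulLp hf hC u g,
    coeFn_compMulLp hf hC u h, Lp.coeFn_add g h,
    Lp.coeFn_add (compMulLp hf hC u g) (compMulLp hf hC u h)] with x hgh hg hh hadd hadd'
  rw [hadd', Pi.add_apply, hgh, hg, hh, hadd, Pi.add_apply, mul_add]

/-- The chain rule map `(u, g) ↦ (F ∘ u, f(u) g)`, where `F(t) = ∫₀ᵗ f`, on pairs of a function
and the family of its derivatives along some vector fields. -/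
def chainLp (hf : Measurable f) (hC : ∀ t, ‖f t‖ ≤ C) (v : Lp ℝ p μ × (ι → Lp ℝ p μ)) :
    Lp ℝ p μ × (ι → Lp ℝ p μ) :=
  ((lipschitzWith_intervalIntegral hf hC 0).compLp intervalIntegral.integral_same v.1,
    fun i => compMulLp hf hC v.1 (v.2 i))

theorem coeFn_chainLp_fst (hf : Measurable f) (hC : ∀ t, ‖f t‖ ≤ C)
    (v : Lp ℝ p μ × (ι → Lp ℝ p μ)) :
    (chainLp hf hC v).1 =ᵐ[μ] fun x => ∫ s in 0..v.1 x, f s :=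
  (lipschitzWith_intervalIntegral hf hC 0).coeFn_compLp intervalIntegral.integral_same v.1

variable [Fact (1 ≤ p)]

theorem tendsto_Lp_of_dominated_convergence {E : Type*} [NormedAddCommGroup E]
    {f : ℕ → Lp E p μ} {g : Lp E p μ} {bound : α → ℝ} (hp : p ≠ ⊤) (hbound : MemLp bound p μ)
    (h_le : ∀ n, ∀ᵐ x ∂μ, ‖f n x‖ ≤ bound x)
    (h_lim : ∀ᵐ x ∂μ, Tendsto (fun n => f n x) atTop (𝓝 (g x))) :
    Tendsto f atTop (𝓝 g) := by
  have hp₀ : p ≠ 0 := (zero_lt_one.trans_le Fact.out).ne'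
  have hp_pos : 0 < p.toReal := ENNReal.toReal_pos hp₀ hp
  have h_limit_le : ∀ᵐ x ∂μ, ‖g x‖ ≤ bound x := by
    filter_upwards [ae_all_iff.2 h_le, h_lim] with x hx hlim
    exact le_of_tendsto' hlim.norm hx
  have h_diff_le (n : ℕ) :
      ∀ᵐ x ∂μ, ‖f n x - g x‖ₑ ^ p.toReal ≤ ‖(2 * bound) x‖ₑ ^ p.toReal := by
    filter_upwards [h_le n, h_limit_le] with x hf hg
    gcongr
    rw [enorm_le_iff_norm_le, Pi.mul_apply, Pi.ofNat_apply, two_mul]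
    exact (norm_sub_le_of_le hf hg).trans (le_abs_self _)
  have h_integral : Tendsto (fun n => ∫⁻ x, ‖f n x - g x‖ₑ ^ p.toReal ∂μ) atTop (𝓝 0) := by
    have h_fin : ∫⁻ x, ‖(2 * bound) x‖ₑ ^ p.toReal ∂μ ≠ ∞ :=
      (lintegral_rpow_enorm_lt_top_of_eLpNorm_lt_top hp₀ hp (hbound.const_mul 2).2).ne
    have h_zero : ∀ᵐ x ∂μ, Tendsto (fun n => ‖f n x - g x‖ₑ ^ p.toReal) atTop (𝓝 0) := by
      filter_upwards [h_lim] with x hx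
      have := (tendsto_sub_nhds_zero_iff.2 hx).enorm.ennrpow_const p.toReal
      simpa [hp_pos] using this
    simpa using tendsto_lintegral_of_dominated_convergence' _
      (fun n => ((Lp.aestronglyMeasurable (f n)).sub
        (Lp.aestronglyMeasurable g)).enorm.pow_const _) h_diff_le h_fin h_zero
  rw [Lp.tendsto_Lp_iff_tendsto_eLpNorm']
  have := h_integral.ennrpow_const (1 / p.toReal)
  rw [ENNReal.zero_rpow_of_pos (one_div_pos.2 hp_pos)] at this
  refine this.congr fun n => ?_
  rw [eLpNorm_eq_lintegral_rpow_enorm_toReal hp₀ hp]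
  simp

theorem tendsto_compMulLp {F : ℕ → ℝ → ℝ} (hp : p ≠ ⊤) (hF : ∀ n, Measurable (F n))
    (hFC : ∀ n t, ‖F n t‖ ≤ C) (hf : Measurable f) (hC : ∀ t, ‖f t‖ ≤ C)
    {U G : ℕ → Lp ℝ p μ} {u g : Lp ℝ p μ} (hG : Tendsto G atTop (𝓝 g))
    (hU : ∀ᵐ x ∂μ, Tendsto (fun n => F n (U n x)) atTop (𝓝 (f (u x)))) :
    Tendsto (fun n => compMulLp (hF n) (hFC n) (U n) (G n)) atTop (𝓝 (compMulLp hf hC u g)) := by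
  have h_small :
      Tendsto (fun n => compMulLp (hF n) (hFC n) (U n) (G n - g)) atTop (𝓝 0) := by
    refine squeeze_zero_norm (fun n => norm_compMulLp_le _ _ _ _) ?_
    simpa using (tendsto_sub_nhds_zero_iff.2 hG).norm.const_mul (C : ℝ)
  have h_main :
      Tendsto (fun n => compMulLp (hF n) (hFC n) (U n) g) atTop (𝓝 (compMulLp hf hC u g)) := by
    refine tendsto_Lp_of_dominated_convergence hp ((Lp.memLp g).norm.const_mul (C : ℝ))
      (fun n => norm_coeFn_compMulLp_le _ _ _ _) ?_
    filter_upwards [ae_all_iff.2 fun n => coeFn_compMulLp (hF n) (hFC n) (U n) g,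
      coeFn_compMulLp hf hC u g, hU] with x hx hx₀ hlim
    simpa only [hx, hx₀] using hlim.mul_const (g x)
  simpa [← compMulLp_add] using h_small.add h_main

theorem continuous_compMulLp (hp : p ≠ ⊤) (hf : Continuous f) (hC : ∀ t, ‖f t‖ ≤ C) :
    Continuous fun v : Lp ℝ p μ × Lp ℝ p μ => compMulLp hf.measurable hC v.1 v.2 := by
  refine continuous_iff_seqContinuous.2 fun V v hV => tendsto_of_subseq_tendsto fun ns hns => ?_
  have hU := ((continuous_fst.tendsto v).comp hV).comp hns
  have hG := ((continuous_snd.tendsto v).comp hV).comp hns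
  obtain ⟨ms, hms, h_ae⟩ := (tendstoInMeasure_of_tendsto_Lp hU).exists_seq_tendsto_ae
  refine ⟨ms, tendsto_compMulLp hp (fun _ => hf.measurable) (fun _ => hC) hf.measurable hC
    (hG.comp hms.tendsto_atTop) ?_⟩
  filter_upwards [h_ae] with x hx
  exact (hf.tendsto _).comp hx

theorem continuous_chainLp (hp : p ≠ ⊤) (hf : Continuous f) (hC : ∀ t, ‖f t‖ ≤ C) :
    Continuous (chainLp hf.measurable hC :
      Lp ℝ p μ × (ι → Lp ℝ p μ) → Lp ℝ p μ × (ι → Lp ℝ p μ)) :=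
  ((LipschitzWith.continuous_compLp _ _).comp continuous_fst).prodMk <|
    continuous_pi fun i => (continuous_compMulLp hp hf hC).comp
      (continuous_fst.prodMk ((continuous_apply i).comp continuous_snd))

theorem tendsto_chainLp {F : ℕ → ℝ → ℝ} (hp : p ≠ ⊤) (hF : ∀ n, Measurable (F n))
    (hFC : ∀ n t, ‖F n t‖ ≤ C) (hf : Measurable f) (hC : ∀ t, ‖f t‖ ≤ C)
    (h_lim : ∀ t, Tendsto (fun n => F n t) atTop (𝓝 (f t))) (v : Lp ℝ p μ × (ι → Lp ℝ p μ)) :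
    Tendsto (fun n => chainLp (hF n) (hFC n) v) atTop (𝓝 (chainLp hf hC v)) := by
  have h_primitive (t : ℝ) :
      Tendsto (fun n => ∫ s in 0..t, F n s) atTop (𝓝 (∫ s in 0..t, f s)) :=
    intervalIntegral.tendsto_integral_filter_of_dominated_convergence (fun _ => (C : ℝ))
      (.of_forall fun n => (hF n).aestronglyMeasurable)
      (.of_forall fun n => .of_forall fun t _ => hFC n t) intervalIntegrable_const
      (.of_forall fun t _ => h_lim t)
  have h_bound (n : ℕ) : ∀ᵐ x ∂μ, ‖(chainLp (hF n) (hFC n) v).1 x‖ ≤ C * ‖v.1 x‖ := by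
    filter_upwards [coeFn_chainLp_fst (hF n) (hFC n) v] with x hx
    rw [hx]
    simpa using intervalIntegral.norm_integral_le_of_norm_le_const
      (a := 0) (b := v.1 x) fun s _ => hFC n s
  have h_fst :
      Tendsto (fun n => (chainLp (hF n) (hFC n) v).1) atTop (𝓝 (chainLp hf hC v).1) := by
    refine tendsto_Lp_of_dominated_convergence hp ((Lp.memLp v.1).norm.const_mul (C : ℝ)) h_bound ?_
    filter_upwards [ae_all_iff.2 fun n => coeFn_chainLp_fst (hF n) (hFC n) v,
      coeFn_chainLp_fst hf hC v] with x hx hx₀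
    simpa only [hx, hx₀] using h_primitive (v.1 x)
  exact h_fst.prodMk_nhds <| tendsto_pi_nhds.2 fun i =>
    tendsto_compMulLp hp hF hFC hf hC tendsto_const_nhds (.of_forall fun x => h_lim _)

end LpChainRule

section ZeroSobolev

open TopologicalSpace Topology
open scoped ENNReal NNReal Distributions ContDiff

theorem contDiff_intervalIntegral {f : ℝ → ℝ} (hf : ContDiff ℝ ∞ f) (a : ℝ) :
    ContDiff ℝ ∞ fun t => ∫ s in a..t, f s := by
  refine contDiff_infty_iff_deriv.2
    ⟨fun t => (hf.continuous.integral_hasStrictDerivAt a t).hasDerivAt.differentiableAt, ?_⟩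
  rwa [funext (hf.continuous.deriv_integral f a)]

variable {E : Type*} [NormedAddCommGroup E] [NormedSpace ℝ E] [MeasurableSpace E] {μ : Measure E}
  {p : ℝ≥0∞} {ι : Type*} {Ω : Opens E} {X : ι → E → E}

/-- The jets `(φ, (X i φ)ᵢ)` of the test functions `φ` on `Ω`, where the vector field `X i` acts on
functions as the derivation `x ↦ fderiv ℝ φ x (X i x)`. -/
def testJets (Ω : Opens E) (X : ι → E → E) (p : ℝ≥0∞) (μ : Measure E) :
    Submodule ℝ (Lp ℝ p μ × (ι → Lp ℝ p μ)) where
  carrier := {v | ∃ φ : 𝓓(Ω, ℝ), v.1 =ᵐ[μ] φ ∧ ∀ i, v.2 i =ᵐ[μ] fun x => fderiv ℝ φ x (X i x)}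
  zero_mem' := by
    refine ⟨0, Lp.coeFn_zero .., fun i => (Lp.coeFn_zero ..).trans (.of_forall fun x => ?_)⟩
    simp [FunLike.coe_zero]
  add_mem' := by
    rintro v w ⟨φ, hv, hv'⟩ ⟨ψ, hw, hw'⟩
    refine ⟨φ + ψ, (Lp.coeFn_add ..).trans (hv.add hw), fun i =>
      (Lp.coeFn_add ..).trans (((hv' i).add (hw' i)).trans (.of_forall fun x => ?_))⟩
    have hφ := φ.contDiff.differentiable (by simp) x
    have hψ := ψ.contDiff.differentiable (by simp) x
    simp [FunLike.coe_add, fderiv_add hφ hψ]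
  smul_mem' := by
    rintro c v ⟨φ, hv, hv'⟩
    refine ⟨c • φ, (Lp.coeFn_smul ..).trans (hv.const_smul c), fun i =>
      (Lp.coeFn_smul ..).trans (((hv' i).const_smul c).trans (.of_forall fun x => ?_))⟩
    have hφ := φ.contDiff.differentiable (by simp) x
    simp [FunLike.coe_smul, fderiv_const_smul hφ]

/-- The Sobolev space of `L^p` functions vanishing on the boundary of `Ω` whose derivatives along
the vector fields `X i` are in `L^p`, encoded as a space of pairs `(u, (X i u)ᵢ)`: the closure of
the jets of test functions. -/
def zeroSobolev (Ω : Opens E) (X : ι → E → E) (p : ℝ≥0∞) [Fact (1 ≤ p)] (μ : Measure E) :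
    Submodule ℝ (Lp ℝ p μ × (ι → Lp ℝ p μ)) :=
  (testJets Ω X p μ).topologicalClosure

variable {f : ℝ → ℝ} {C : ℝ≥0}

theorem chainLp_mem_testJets (hf : ContDiff ℝ ∞ f) (hC : ∀ t, ‖f t‖ ≤ C)
    {v : Lp ℝ p μ × (ι → Lp ℝ p μ)} (hv : v ∈ testJets Ω X p μ) :
    chainLp hf.continuous.measurable hC v ∈ testJets Ω X p μ := by
  obtain ⟨φ, hφ, hφ'⟩ := hv
  let F : ℝ → ℝ := fun t => ∫ s in 0..t, f s
  have hF₀ : F 0 = 0 := intervalIntegral.integral_same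
  have h_chain (x e : E) : fderiv ℝ (F ∘ φ) x e = f (φ x) * fderiv ℝ φ x e := by
    have hF : HasDerivAt F (f (φ x)) (φ x) :=
      (hf.continuous.integral_hasStrictDerivAt 0 _).hasDerivAt
    have hφx := (φ.contDiff.differentiable (by simp) x).hasFDerivAt
    simp [(hF.comp_hasFDerivAt x hφx).fderiv]
  refine ⟨⟨F ∘ φ, (contDiff_intervalIntegral hf 0).comp φ.contDiff,
    φ.hasCompactSupport.comp_left hF₀,
    (tsupport_comp_subset hF₀ φ).trans φ.tsupport_subset⟩, ?_, fun i => ?_⟩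
  · filter_upwards [coeFn_chainLp_fst hf.continuous.measurable hC v, hφ] with x hx hφx
    rw [hx, hφx]
    rfl
  · filter_upwards [coeFn_compMulLp hf.continuous.measurable hC v.1 (v.2 i), hφ, hφ' i]
      with x hx hφx hφx'
    exact (hx.trans (by rw [hφx, hφx'])).trans (h_chain x (X i x)).symm

variable [Fact (1 ≤ p)]

theorem chainLp_mem_zeroSobolev_of_contDiff (hp : p ≠ ⊤) (hf : ContDiff ℝ ∞ f)
    (hC : ∀ t, ‖f t‖ ≤ C) {v : Lp ℝ p μ × (ι → Lp ℝ p μ)} (hv : v ∈ zeroSobolev Ω X p μ) :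
    chainLp hf.continuous.measurable hC v ∈ zeroSobolev Ω X p μ :=
  map_mem_closure (continuous_chainLp hp hf.continuous hC) hv fun _ hw =>
    chainLp_mem_testJets hf hC hw

theorem chainLp_mem_zeroSobolev {F : ℕ → ℝ → ℝ} (hp : p ≠ ⊤) (hF : ∀ n, ContDiff ℝ ∞ (F n))
    (hFC : ∀ n t, ‖F n t‖ ≤ C) (hf : Measurable f) (hC : ∀ t, ‖f t‖ ≤ C)
    (h_lim : ∀ t, Tendsto (fun n => F n t) atTop (𝓝 (f t)))
    {v : Lp ℝ p μ × (ι → Lp ℝ p μ)} (hv : v ∈ zeroSobolev Ω X p μ) :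
    chainLp hf hC v ∈ zeroSobolev Ω X p μ :=
  (testJets Ω X p μ).isClosed_topologicalClosure.mem_of_tendsto
    (tendsto_chainLp hp (fun n => (hF n).continuous.measurable) hFC hf hC h_lim v)
    (.of_forall fun n => chainLp_mem_zeroSobolev_of_contDiff hp (hF n) (hFC n) hv)

theorem tendsto_smoothTransition_nat_mul (t : ℝ) :
    Tendsto (fun n : ℕ => Real.smoothTransition (n * t)) atTop
      (𝓝 ((Ioi (0 : ℝ)).indicator 1 t)) := by
  rcases le_or_gt t 0 with ht | ht
  · rw [indicator_of_notMem (notMem_Ioi.2 ht)]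
    refine tendsto_const_nhds.congr fun n => (Real.smoothTransition.zero_of_nonpos ?_).symm
    exact mul_nonpos_of_nonneg_of_nonpos n.cast_nonneg ht
  · rw [indicator_of_mem (mem_Ioi.2 ht)]
    have h_ge : ∀ᶠ n : ℕ in atTop, 1 ≤ n * t :=
      (tendsto_natCast_atTop_atTop.atTop_mul_const ht).eventually_ge_atTop 1
    exact tendsto_const_nhds.congr' (h_ge.mono fun n hn =>
      (Real.smoothTransition.one_of_one_le hn).symm)

theorem intervalIntegral_indicator_Ioi_one (t : ℝ) :
    ∫ s in 0..t, (Ioi (0 : ℝ)).indicator 1 s = max t 0 := by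
  rcases le_total t 0 with ht | ht
  · rw [intervalIntegral.integral_symm, intervalIntegral.integral_of_le ht, max_eq_right ht,
      setIntegral_eq_zero_of_forall_eq_zero, neg_zero]
    intro s hs
    exact indicator_of_notMem (notMem_Ioi.2 hs.2) _
  · rw [intervalIntegral.integral_of_le ht, max_eq_left ht,
      setIntegral_congr_fun measurableSet_Ioc fun s hs => indicator_of_mem (mem_Ioi.2 hs.1) _]
    simp [ht]

theorem exists_posPart_mem_zeroSobolev (hp : p ≠ ⊤) {v : Lp ℝ p μ × (ι → Lp ℝ p μ)}
    (hv : v ∈ zeroSobolev Ω X p μ) :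
    ∃ w ∈ zeroSobolev Ω X p μ, w.1 =ᵐ[μ] (fun x => max (v.1 x) 0) ∧
      ∀ i, w.2 i =ᵐ[μ] fun x => if 0 < v.1 x then v.2 i x else 0 := by
  have hf : Measurable ((Ioi (0 : ℝ)).indicator (1 : ℝ → ℝ)) :=
    measurable_one.indicator measurableSet_Ioi
  have hC (t : ℝ) : ‖(Ioi (0 : ℝ)).indicator (1 : ℝ → ℝ) t‖ ≤ (1 : ℝ≥0) := by
    simpa using norm_indicator_le_norm_self (1 : ℝ → ℝ) t
  have hF (n : ℕ) : ContDiff ℝ ∞ fun t : ℝ => Real.smoothTransition (n * t) :=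
    Real.smoothTransition.contDiff.comp (contDiff_const.mul contDiff_id)
  have hFC (n : ℕ) (t : ℝ) : ‖Real.smoothTransition (n * t)‖ ≤ (1 : ℝ≥0) := by
    rw [Real.norm_of_nonneg (Real.smoothTransition.nonneg _)]
    exact Real.smoothTransition.le_one _
  refine ⟨chainLp hf hC v,
    chainLp_mem_zeroSobolev hp hF hFC hf hC tendsto_smoothTransition_nat_mul hv, ?_, fun i => ?_⟩
  · simpa only [intervalIntegral_indicator_Ioi_one] using coeFn_chainLp_fst hf hC v
  · filter_upwards [coeFn_compMulLp hf hC v.1 (v.2 i)] with x hx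
    exact hx.trans (by simp [indicator_apply])

theorem exists_negPart_mem_zeroSobolev (hp : p ≠ ⊤) {v : Lp ℝ p μ × (ι → Lp ℝ p μ)}
    (hv : v ∈ zeroSobolev Ω X p μ) :
    ∃ w ∈ zeroSobolev Ω X p μ, w.1 =ᵐ[μ] (fun x => -min (v.1 x) 0) ∧
      ∀ i, w.2 i =ᵐ[μ] fun x => if v.1 x < 0 then -v.2 i x else 0 := by
  obtain ⟨w, hw, hw₁, hw₂⟩ := exists_posPart_mem_zeroSobolev hp (neg_mem hv)
  refine ⟨w, hw, ?_, fun i => ?_⟩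
  · filter_upwards [hw₁, Lp.coeFn_neg v.1] with x hx hneg
    rw [hx, Prod.fst_neg, hneg, Pi.neg_apply, ← max_neg_neg, neg_zero]
  · filter_upwards [hw₂ i, Lp.coeFn_neg v.1, Lp.coeFn_neg (v.2 i)] with x hx hneg hneg'
    rw [hx, Prod.fst_neg, hneg, Prod.snd_neg, Pi.neg_apply v.2, hneg']
    simp

theorem exists_abs_mem_zeroSobolev (hp : p ≠ ⊤) {v : Lp ℝ p μ × (ι → Lp ℝ p μ)}
    (hv : v ∈ zeroSobolev Ω X p μ) :
    ∃ w ∈ zeroSobolev Ω X p μ, w.1 =ᵐ[μ] (fun x => |v.1 x|) ∧ ∀ i, w.2 i =ᵐ[μ] fun x =>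
      if 0 < v.1 x then v.2 i x else if v.1 x < 0 then -v.2 i x else 0 := by
  obtain ⟨a, ha, ha₁, ha₂⟩ := exists_posPart_mem_zeroSobolev hp hv
  obtain ⟨b, hb, hb₁, hb₂⟩ := exists_negPart_mem_zeroSobolev hp hv
  refine ⟨a + b, add_mem ha hb, ?_, fun i => ?_⟩
  · filter_upwards [ha₁, hb₁, Lp.coeFn_add a.1 b.1] with x ha hb hadd
    rw [Prod.fst_add, hadd, Pi.add_apply, ha, hb]
    rcases le_total (v.1 x) 0 with h | h <;> simp [h, abs_of_nonpos, abs_of_nonneg]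
  · filter_upwards [ha₂ i, hb₂ i, Lp.coeFn_add (a.2 i) (b.2 i)] with x ha hb hadd
    rw [Prod.snd_add, Pi.add_apply a.2, hadd, Pi.add_apply, ha, hb]
    rcases lt_trichotomy (v.1 x) 0 with h | h | h <;> simp [h, h.le.not_gt]

end ZeroSobolev

section WeakDerivative

open TopologicalSpace
open scoped ENNReal Distributions

theorem continuous_integral_Lp_mul {α : Type*} [MeasurableSpace α] {μ : Measure α} {p q : ℝ≥0∞}
    [Fact (1 ≤ p)] [hpq : ENNReal.HolderConjugate p q] {h : α → ℝ} (hh : MemLp h q μ) :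
    Continuous fun u : Lp ℝ p μ => ∫ x, u x * h x ∂μ := by
  have : Fact (1 ≤ q) := ⟨hpq.symm.one_le⟩
  refine (((ContinuousLinearMap.mul ℝ ℝ).lpPairing μ p q).flip hh.toLp).continuous.congr
    fun u => ?_
  rw [ContinuousLinearMap.flip_apply, ContinuousLinearMap.lpPairing_eq_integral]
  refine integral_congr_ae ?_
  filter_upwards [hh.coeFn_toLp] with x hx
  simp [hx]

theorem continuous_mul_of_tsupport_subset {Y : Type*} [TopologicalSpace Y] {s : Set Y}
    (hs : IsOpen s) {w h : Y → ℝ} (hw : ContinuousOn w s) (hh : Continuous h)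
    (hsupp : tsupport h ⊆ s) : Continuous fun x => w x * h x := by
  refine continuous_of_tsupport fun x hx => ?_
  have hxs : x ∈ s := hsupp (closure_mono (Function.support_mul_subset_right _ _) hx)
  exact (hw.continuousAt (hs.mem_nhds hxs)).mul hh.continuousAt

variable {E : Type*} [NormedAddCommGroup E] [NormedSpace ℝ E] [FiniteDimensional ℝ E]
  [MeasurableSpace E] [BorelSpace E] {μ : Measure E} {p : ℝ≥0∞} {Ω : Opens E} {w : E → ℝ}

theorem locallyIntegrableOn_inv_mul_of_memLp [IsLocallyFiniteMeasure μ] [Fact (1 ≤ p)]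
    (hw : ContinuousOn w Ω) (hw₀ : ∀ x ∈ Ω, w x ≠ 0) {h : E → ℝ} (hh : MemLp h p (μ.restrict Ω)) :
    LocallyIntegrableOn (fun x => (w x)⁻¹ * h x) Ω μ :=
  (locallyIntegrableOn_of_locallyIntegrable_restrict
    (hh.locallyIntegrable Fact.out)).continuousOn_mul (hw.inv₀ hw₀) Ω.isOpen.isLocallyClosed

variable [μ.IsAddHaarMeasure]

theorem integral_mul_fderiv_testFunction (φ ψ : 𝓓(Ω, ℝ)) (e : E) :
    ∫ x in Ω, ψ x * fderiv ℝ φ x e ∂μ = -∫ x in Ω, fderiv ℝ ψ x e * φ x ∂μ := by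
  have h_int {a b : E → ℝ} (ha : Continuous a) (ha' : HasCompactSupport a) (hb : Continuous b) :
      Integrable (fun x => a x * b x) μ :=
    (ha.mul hb).integrable_of_hasCompactSupport ha'.mul_right
  have hφ' : Continuous fun x => fderiv ℝ φ x e :=
    (φ.contDiff.continuous_fderiv (by simp)).clm_apply continuous_const
  have hψ' : Continuous fun x => fderiv ℝ ψ x e :=
    (ψ.contDiff.continuous_fderiv (by simp)).clm_apply continuous_const
  have hψ₀ (x : E) (hx : x ∉ Ω) : ψ x = 0 :=
    image_eq_zero_of_notMem_tsupport fun h => hx (ψ.tsupport_subset h)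
  have hφ₀ (x : E) (hx : x ∉ Ω) : φ x = 0 :=
    image_eq_zero_of_notMem_tsupport fun h => hx (φ.tsupport_subset h)
  rw [setIntegral_eq_integral_of_forall_compl_eq_zero fun x hx => by simp [hψ₀ x hx],
    setIntegral_eq_integral_of_forall_compl_eq_zero fun x hx => by simp [hφ₀ x hx]]
  exact integral_mul_fderiv_eq_neg_fderiv_mul_of_integrable
    (h_int hψ' (ψ.hasCompactSupport.fderiv_apply (𝕜 := ℝ) e) φ.continuous)
    (h_int ψ.continuous ψ.hasCompactSupport hφ')
    (h_int ψ.continuous ψ.hasCompactSupport φ.continuous)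
    (fun x _ => ψ.contDiff.differentiable (by simp) x)
    (fun x _ => φ.contDiff.differentiable (by simp) x)

variable [Fact (1 ≤ p)] {ι : Type*} {X : ι → E → E} {i : ι} {e : E}

theorem integral_mul_fderiv_eq_of_mem_zeroSobolev
    (hX : ∀ x ∈ Ω, X i x = w x • e) (hw : ContinuousOn w Ω) (hw₀ : ∀ x ∈ Ω, w x ≠ 0)
    {v : Lp ℝ p (μ.restrict Ω) × (ι → Lp ℝ p (μ.restrict Ω))}
    (hv : v ∈ zeroSobolev Ω X p (μ.restrict Ω)) (φ : 𝓓(Ω, ℝ)) :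
    ∫ x in Ω, v.1 x * fderiv ℝ φ x e ∂μ = -∫ x in Ω, ((w x)⁻¹ * v.2 i x) * φ x ∂μ := by
  simp_rw [mul_comm (w _)⁻¹ (v.2 i _), mul_assoc]
  have := ENNReal.HolderConjugate.inv_one_sub_inv' (Fact.out : 1 ≤ p)
  have hφ' : MemLp (fun x => fderiv ℝ φ x e) (1 - p⁻¹)⁻¹ (μ.restrict Ω) :=
    ((φ.contDiff.continuous_fderiv (by simp)).clm_apply continuous_const).memLp_of_hasCompactSupport
      (φ.hasCompactSupport.fderiv_apply (𝕜 := ℝ) e)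
  have hφ : MemLp (fun x => (w x)⁻¹ * φ x) (1 - p⁻¹)⁻¹ (μ.restrict Ω) :=
    (continuous_mul_of_tsupport_subset Ω.isOpen (hw.inv₀ hw₀) φ.continuous
      φ.tsupport_subset).memLp_of_hasCompactSupport
      φ.hasCompactSupport.mul_left
  have h_closed : IsClosed {v : Lp ℝ p (μ.restrict Ω) × (ι → Lp ℝ p (μ.restrict Ω)) |
      ∫ x in Ω, v.1 x * fderiv ℝ φ x e ∂μ = -∫ x in Ω, v.2 i x * ((w x)⁻¹ * φ x) ∂μ} :=
    isClosed_eq ((continuous_integral_Lp_mul hφ').comp continuous_fst)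
      ((continuous_integral_Lp_mul hφ).comp ((continuous_apply i).comp continuous_snd)).neg
  refine closure_minimal (fun v hv => ?_) h_closed hv
  obtain ⟨ψ, hψ, hψ'⟩ := hv
  have h_left : ∫ x in Ω, v.1 x * fderiv ℝ φ x e ∂μ = ∫ x in Ω, ψ x * fderiv ℝ φ x e ∂μ :=
    integral_congr_ae (by filter_upwards [hψ] with x hx using by rw [hx])
  have h_right :
      ∫ x in Ω, v.2 i x * ((w x)⁻¹ * φ x) ∂μ = ∫ x in Ω, fderiv ℝ ψ x e * φ x ∂μ := by
    refine integral_congr_ae ?_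
    filter_upwards [hψ' i, ae_restrict_mem Ω.isOpen.measurableSet] with x hx hxΩ
    rw [hx, hX x hxΩ, map_smul, smul_eq_mul]
    field [hw₀ x hxΩ]
  exact h_left.trans ((integral_mul_fderiv_testFunction φ ψ e).trans (by rw [h_right]))

theorem snd_eq_zero_of_mem_zeroSobolev
    (hX : ∀ x ∈ Ω, X i x = w x • e) (hw : ContinuousOn w Ω) (hw₀ : ∀ x ∈ Ω, w x ≠ 0)
    {v : Lp ℝ p (μ.restrict Ω) × (ι → Lp ℝ p (μ.restrict Ω))}
    (hv : v ∈ zeroSobolev Ω X p (μ.restrict Ω)) (hv₁ : v.1 = 0) : v.2 i = 0 := by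
  have h_weak (φ : 𝓓(Ω, ℝ)) : ∫ x, φ x • ((w x)⁻¹ * v.2 i x) ∂μ = 0 := by
    have h_left : ∫ x in Ω, v.1 x * fderiv ℝ φ x e ∂μ = 0 := by
      refine integral_eq_zero_of_ae ?_
      filter_upwards [(Lp.eq_zero_iff_ae_eq_zero ..).1 hv₁] with x hx
      simp [hx]
    have hφ₀ (x : E) (hx : x ∉ Ω) : φ x = 0 :=
      image_eq_zero_of_notMem_tsupport fun h => hx (φ.tsupport_subset h)
    have h_right := integral_mul_fderiv_eq_of_mem_zeroSobolev hX hw hw₀ hv φ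
    rw [h_left, setIntegral_eq_integral_of_forall_compl_eq_zero
      fun x hx => by rw [hφ₀ x hx, mul_zero], zero_eq_neg] at h_right
    simpa only [smul_eq_mul, mul_comm] using h_right
  have h_zero := Ω.isOpen.ae_eq_zero_of_integral_contDiff_smul_eq_zero
    (locallyIntegrableOn_inv_mul_of_memLp hw hw₀ (Lp.memLp (v.2 i)))
    fun φ hφ hφ' hφΩ => h_weak ⟨φ, hφ, hφ', hφΩ⟩
  refine (Lp.eq_zero_iff_ae_eq_zero ..).2 ((ae_restrict_iff' Ω.isOpen.measurableSet).2 ?_)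
  filter_upwards [h_zero] with x hx hxΩ
  exact (mul_eq_zero.1 (hx hxΩ)).resolve_left (inv_ne_zero (hw₀ x hxΩ))

theorem ae_snd_eq_zero_of_mem_zeroSobolev (hp : p ≠ ⊤)
    (hX : ∀ x ∈ Ω, X i x = w x • e) (hw : ContinuousOn w Ω) (hw₀ : ∀ x ∈ Ω, w x ≠ 0)
    {v : Lp ℝ p (μ.restrict Ω) × (ι → Lp ℝ p (μ.restrict Ω))}
    (hv : v ∈ zeroSobolev Ω X p (μ.restrict Ω)) :
    ∀ᵐ x ∂μ.restrict Ω, v.1 x = 0 → v.2 i x = 0 := by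
  obtain ⟨a, ha, ha₁, ha₂⟩ := exists_posPart_mem_zeroSobolev hp hv
  obtain ⟨b, hb, hb₁, hb₂⟩ := exists_negPart_mem_zeroSobolev hp hv
  have h_fst : (a - b - v).1 = 0 := by
    refine (Lp.eq_zero_iff_ae_eq_zero ..).2 ?_
    filter_upwards [ha₁, hb₁, Lp.coeFn_sub (a.1 - b.1) v.1, Lp.coeFn_sub a.1 b.1]
      with x ha hb hs hs'
    rw [Prod.fst_sub, Prod.fst_sub, hs, Pi.sub_apply, hs', Pi.sub_apply, ha, hb, sub_neg_eq_add,
      max_add_min, add_zero, sub_self, Pi.zero_apply]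
  have h_snd : (a - b - v).2 i = 0 :=
    snd_eq_zero_of_mem_zeroSobolev hX hw hw₀ (sub_mem (sub_mem ha hb) hv) h_fst
  filter_upwards [ha₂ i, hb₂ i, Lp.coeFn_sub (a.2 i) (b.2 i)] with x ha hb hs hx
  rw [← sub_eq_zero.1 h_snd, Prod.snd_sub, Pi.sub_apply a.2, hs, Pi.sub_apply, ha, hb]
  simp [hx]

end WeakDerivative

section UnitSquare

open TopologicalSpace

/-- The open unit square, as a bundled open set. -/
def omegaOpens : Opens (ℝ × ℝ) := ⟨Omega, isOpen_Ioo.prod isOpen_Ioo⟩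

/-- The weights `y ^ α₁` and `x ^ α₂` of the two partial derivatives. -/
def weight (α₁ α₂ : ℝ) : Fin 2 → ℝ × ℝ → ℝ := ![fun p => p.2 ^ α₁, fun p => p.1 ^ α₂]

/-- The directions of the two partial derivatives. -/
def direction : Fin 2 → ℝ × ℝ := ![(1, 0), (0, 1)]

/-- The degenerate vector fields `y ^ α₁ ∂ₓ` and `x ^ α₂ ∂_y`. -/
def weightedField (α₁ α₂ : ℝ) (i : Fin 2) (p : ℝ × ℝ) : ℝ × ℝ := weight α₁ α₂ i p • direction i

variable {α₁ α₂ : ℝ}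

theorem weight_ne_zero (i : Fin 2) : ∀ p ∈ omegaOpens, weight α₁ α₂ i p ≠ 0 := by
  rintro p ⟨hx, hy⟩
  fin_cases i
  · exact (Real.rpow_pos_of_pos hy.1 α₁).ne'
  · exact (Real.rpow_pos_of_pos hx.1 α₂).ne'

theorem continuousOn_weight (i : Fin 2) : ContinuousOn (weight α₁ α₂ i) omegaOpens := by
  rintro p ⟨hx, hy⟩
  fin_cases i
  · exact (continuousAt_snd.rpow_const (.inl hy.1.ne')).continuousWithinAt
  · exact (continuousAt_fst.rpow_const (.inl hx.1.ne')).continuousWithinAt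

/-- `Represents α₁ α₂ v u gx gy` says that `v` is the triple of `L²(Ω)` classes of `u`,
`y ^ α₁ gx` and `x ^ α₂ gy`. -/
structure Represents (α₁ α₂ : ℝ)
    (v : Lp ℝ 2 (volume.restrict Omega) × (Fin 2 → Lp ℝ 2 (volume.restrict Omega)))
    (u gx gy : ℝ × ℝ → ℝ) : Prop where
  fst : v.1 =ᵐ[volume.restrict Omega] u
  sndX : v.2 0 =ᵐ[volume.restrict Omega] fun p => p.2 ^ α₁ * gx p
  sndY : v.2 1 =ᵐ[volume.restrict Omega] fun p => p.1 ^ α₂ * gy p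

variable {u gx gy : ℝ × ℝ → ℝ}
  {v w : Lp ℝ 2 (volume.restrict Omega) × (Fin 2 → Lp ℝ 2 (volume.restrict Omega))}

theorem Represents.sub {u' gx' gy' : ℝ × ℝ → ℝ} (hv : Represents α₁ α₂ v u gx gy)
    (hw : Represents α₁ α₂ w u' gx' gy') :
    Represents α₁ α₂ (v - w) (fun p => u p - u' p) (fun p => gx p - gx' p)
      (fun p => gy p - gy' p) where
  fst := (Lp.coeFn_sub ..).trans (hv.fst.sub hw.fst)
  sndX := (Lp.coeFn_sub ..).trans <|
    (hv.sndX.sub hw.sndX).trans (.of_forall fun _ => (mul_sub ..).symm)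
  sndY := (Lp.coeFn_sub ..).trans <|
    (hv.sndY.sub hw.sndY).trans (.of_forall fun _ => (mul_sub ..).symm)

theorem Represents.map {F : ℝ → ℝ} {G : ℝ → ℝ → ℝ} (hG : ∀ t c s, G t (c * s) = c * G t s)
    (hv : Represents α₁ α₂ v u gx gy) (hw : w.1 =ᵐ[volume.restrict Omega] fun p => F (v.1 p))
    (hw' : ∀ i, w.2 i =ᵐ[volume.restrict Omega] fun p => G (v.1 p) (v.2 i p)) :
    Represents α₁ α₂ w (fun p => F (u p)) (fun p => G (u p) (gx p)) (fun p => G (u p) (gy p)) where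
  fst := by filter_upwards [hw, hv.fst] with p hp hu using by rw [hp, hu]
  sndX := by filter_upwards [hw' 0, hv.fst, hv.sndX] with p hp hu hx using by rw [hp, hu, hx, hG]
  sndY := by filter_upwards [hw' 1, hv.fst, hv.sndY] with p hp hu hy using by rw [hp, hu, hy, hG]

theorem exists_represents (hu : MemLp u 2 (volume.restrict Omega))
    (hx : MemLp (fun p => p.2 ^ α₁ * gx p) 2 (volume.restrict Omega))
    (hy : MemLp (fun p => p.1 ^ α₂ * gy p) 2 (volume.restrict Omega)) :
    ∃ v, Represents α₁ α₂ v u gx gy :=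
  ⟨(hu.toLp, ![hx.toLp, hy.toLp]), hu.coeFn_toLp, hx.coeFn_toLp, hy.coeFn_toLp⟩

theorem exists_represents_of_isTest {φ : ℝ × ℝ → ℝ} (hφ : IsTest φ) :
    ∃ v, Represents α₁ α₂ v φ (pdx φ) (pdy φ) := by
  obtain ⟨h_smooth, h_compact, hΩ⟩ := hφ
  have h_deriv (i : Fin 2) : MemLp (fun p => weight α₁ α₂ i p * fderiv ℝ φ p (direction i)) 2
      (volume.restrict Omega) :=
    (continuous_mul_of_tsupport_subset omegaOpens.isOpen (continuousOn_weight i)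
      ((h_smooth.continuous_fderiv (by simp)).clm_apply continuous_const)
      ((tsupport_fderiv_apply_subset ℝ _).trans hΩ)).memLp_of_hasCompactSupport
        (h_compact.fderiv_apply (𝕜 := ℝ) _).mul_left
  exact exists_represents (h_smooth.continuous.memLp_of_hasCompactSupport h_compact)
    (h_deriv 0) (h_deriv 1)

theorem integral_sq_eq_norm_sq {α : Type*} [MeasurableSpace α] {μ : Measure α} {f : Lp ℝ 2 μ}
    {g : α → ℝ} (h : f =ᵐ[μ] g) : ∫ x, g x ^ 2 ∂μ = ‖f‖ ^ 2 := by
  rw [← real_inner_self_eq_norm_sq, L2.inner_def]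
  refine integral_congr_ae ?_
  filter_upwards [h] with x hx
  rw [← hx, real_inner_self_eq_norm_sq, Real.norm_eq_abs, sq_abs]

theorem Represents.h1Norm_eq (hv : Represents α₁ α₂ v u gx gy) :
    H1Norm α₁ α₂ u gx gy = √(‖v.1‖ ^ 2 + ‖v.2 0‖ ^ 2 + ‖v.2 1‖ ^ 2) := by
  rw [H1Norm, integral_sq_eq_norm_sq hv.fst, integral_sq_eq_norm_sq hv.sndX,
    integral_sq_eq_norm_sq hv.sndY]

theorem Represents.norm_le_h1Norm (hv : Represents α₁ α₂ v u gx gy) :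
    ‖v‖ ≤ H1Norm α₁ α₂ u gx gy := by
  rw [hv.h1Norm_eq]
  refine norm_prod_le_iff.2 ⟨?_, (pi_norm_le_iff_of_nonneg (Real.sqrt_nonneg _)).2 <|
    Fin.forall_fin_two.2 ⟨?_, ?_⟩⟩ <;>
  exact Real.le_sqrt_of_sq_le (by linarith [sq_nonneg ‖v.1‖, sq_nonneg ‖v.2 0‖, sq_nonneg ‖v.2 1‖])

theorem Represents.h1Norm_le (hv : Represents α₁ α₂ v u gx gy) :
    H1Norm α₁ α₂ u gx gy ≤ 2 * ‖v‖ := by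
  rw [hv.h1Norm_eq]
  have h_fst : ‖v.1‖ ≤ ‖v‖ := norm_fst_le v
  have h_snd (i : Fin 2) : ‖v.2 i‖ ≤ ‖v‖ := (norm_le_pi_norm v.2 i).trans (norm_snd_le v)
  refine Real.sqrt_le_iff.2 ⟨by positivity, ?_⟩
  nlinarith [pow_le_pow_left₀ (norm_nonneg _) h_fst 2, pow_le_pow_left₀ (norm_nonneg _) (h_snd 0) 2,
    pow_le_pow_left₀ (norm_nonneg _) (h_snd 1) 2]

variable (α₁ α₂) in
/-- The space `𝓗₀¹(Ω)`, as a space of triples of `L²(Ω)` classes. -/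
abbrev squareZeroSobolev :
    Submodule ℝ (Lp ℝ 2 (volume.restrict Omega) × (Fin 2 → Lp ℝ 2 (volume.restrict Omega))) :=
  zeroSobolev omegaOpens (weightedField α₁ α₂) 2 (volume.restrict Omega)

theorem mem_testJets_iff_exists_represents :
    v ∈ testJets omegaOpens (weightedField α₁ α₂) 2 (volume.restrict Omega) ↔
      ∃ φ, IsTest φ ∧ Represents α₁ α₂ v φ (pdx φ) (pdy φ) := by
  have h_field (φ : ℝ × ℝ → ℝ) (i : Fin 2) (p : ℝ × ℝ) :
      fderiv ℝ φ p (weightedField α₁ α₂ i p) = weight α₁ α₂ i p * fderiv ℝ φ p (direction i) :=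
    map_smul ..
  constructor
  · rintro ⟨φ, hφ, hφ'⟩
    simp only [h_field] at hφ'
    exact ⟨φ, ⟨φ.contDiff, φ.hasCompactSupport, φ.tsupport_subset⟩, hφ, hφ' 0, hφ' 1⟩
  · rintro ⟨φ, ⟨hφ, hφ', hφΩ⟩, h⟩
    refine ⟨⟨φ, hφ, hφ', hφΩ⟩, h.fst, Fin.forall_fin_two.2 ⟨?_, ?_⟩⟩
    · exact h.sndX.trans (.of_forall fun p => (h_field φ 0 p).symm)
    · exact h.sndY.trans (.of_forall fun p => (h_field φ 1 p).symm)

theorem hasWeakDeriv_of_mem_squareZeroSobolev (hv : v ∈ squareZeroSobolev α₁ α₂) {i : Fin 2}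
    {g : ℝ × ℝ → ℝ} (hu : v.1 =ᵐ[volume.restrict Omega] u)
    (hg : v.2 i =ᵐ[volume.restrict Omega] fun p => weight α₁ α₂ i p * g p) :
    LocallyIntegrableOn u Omega ∧ LocallyIntegrableOn g Omega ∧ ∀ φ : ℝ × ℝ → ℝ, IsTest φ →
      ∫ p in Omega, u p * fderiv ℝ φ p (direction i) = -∫ p in Omega, g p * φ p := by
  have hg' : (fun p => (weight α₁ α₂ i p)⁻¹ * v.2 i p) =ᵐ[volume.restrict Omega] g := by
    filter_upwards [hg, ae_restrict_mem omegaOpens.isOpen.measurableSet] with p hp hpΩ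
    rw [hp, inv_mul_cancel_left₀ (weight_ne_zero i p hpΩ)]
  refine ⟨?_, ?_, fun φ ⟨hφ, hφ', hφΩ⟩ => ?_⟩
  · exact (locallyIntegrableOn_of_locallyIntegrable_restrict
      ((Lp.memLp v.1).locallyIntegrable one_le_two)).congr hu
  · exact (locallyIntegrableOn_inv_mul_of_memLp (continuousOn_weight i) (weight_ne_zero i)
      (Lp.memLp (v.2 i))).congr hg'
  · have h_left : ∫ p in Omega, v.1 p * fderiv ℝ φ p (direction i) =
        ∫ p in Omega, u p * fderiv ℝ φ p (direction i) :=
      integral_congr_ae (hu.mul (.refl _ _))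
    have h_right : ∫ p in Omega, ((weight α₁ α₂ i p)⁻¹ * v.2 i p) * φ p =
        ∫ p in Omega, g p * φ p :=
      integral_congr_ae (hg'.mul (.refl _ _))
    rw [← h_left, ← h_right]
    exact integral_mul_fderiv_eq_of_mem_zeroSobolev (Ω := omegaOpens) (fun _ _ => rfl)
      (continuousOn_weight i) (weight_ne_zero i) hv ⟨φ, hφ, hφ', hφΩ⟩

theorem Represents.memH1 (h : Represents α₁ α₂ v u gx gy) (hv : v ∈ squareZeroSobolev α₁ α₂) :
    MemH1 α₁ α₂ u gx gy where
  memL2 := (memLp_congr_ae h.fst).1 (Lp.memLp v.1)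
  weakX := hasWeakDeriv_of_mem_squareZeroSobolev hv (i := 0) h.fst h.sndX
  weakY := hasWeakDeriv_of_mem_squareZeroSobolev hv (i := 1) h.fst h.sndY
  wgx := (memLp_congr_ae h.sndX).1 (Lp.memLp (v.2 0))
  wgy := (memLp_congr_ae h.sndY).1 (Lp.memLp (v.2 1))

theorem memH10_iff_exists_represents :
    MemH10 α₁ α₂ u gx gy ↔ ∃ v ∈ squareZeroSobolev α₁ α₂, Represents α₁ α₂ v u gx gy := by
  constructor
  · rintro ⟨hu, h_approx⟩
    obtain ⟨v, hv⟩ := exists_represents hu.memL2 hu.wgx hu.wgy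
    refine ⟨v, Metric.mem_closure_iff.2 fun ε hε => ?_, hv⟩
    obtain ⟨φ, hφ, hφε⟩ := h_approx ε hε
    obtain ⟨w, hw⟩ := exists_represents_of_isTest (α₁ := α₁) (α₂ := α₂) hφ
    refine ⟨w, mem_testJets_iff_exists_represents.2 ⟨φ, hφ, hw⟩, ?_⟩
    rw [dist_eq_norm]
    exact (hv.sub hw).norm_le_h1Norm.trans_lt hφε
  · rintro ⟨v, hv, h⟩
    refine ⟨h.memH1 hv, fun ε hε => ?_⟩
    obtain ⟨w, hw, hwε⟩ := Metric.mem_closure_iff.1 hv (ε / 2) (half_pos hε)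
    obtain ⟨φ, hφ, hφw⟩ := mem_testJets_iff_exists_represents.1 hw
    refine ⟨φ, hφ, (h.sub hφw).h1Norm_le.trans_lt ?_⟩
    rw [← dist_eq_norm]
    linarith

theorem MemH10.map {F : ℝ → ℝ} {G : ℝ → ℝ → ℝ} (hG : ∀ t c s, G t (c * s) = c * G t s)
    (hFG : ∀ v ∈ squareZeroSobolev α₁ α₂, ∃ w ∈ squareZeroSobolev α₁ α₂,
      w.1 =ᵐ[volume.restrict Omega] (fun p => F (v.1 p)) ∧
        ∀ i, w.2 i =ᵐ[volume.restrict Omega] fun p => G (v.1 p) (v.2 i p))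
    (hu : MemH10 α₁ α₂ u gx gy) :
    MemH10 α₁ α₂ (fun p => F (u p)) (fun p => G (u p) (gx p)) (fun p => G (u p) (gy p)) := by
  obtain ⟨v, hv, h⟩ := memH10_iff_exists_represents.1 hu
  obtain ⟨w, hw, hw₁, hw₂⟩ := hFG v hv
  exact memH10_iff_exists_represents.2 ⟨w, hw, h.map hG hw₁ hw₂⟩

theorem MemH10.posPart (hu : MemH10 α₁ α₂ u gx gy) :
    MemH10 α₁ α₂ (fun p => max (u p) 0) (fun p => if 0 < u p then gx p else 0)
      (fun p => if 0 < u p then gy p else 0) :=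
  hu.map (F := fun t => max t 0) (G := fun t s => if 0 < t then s else 0)
    (fun _ _ _ => by simp) fun _ => exists_posPart_mem_zeroSobolev ENNReal.ofNat_ne_top

theorem MemH10.negPart (hu : MemH10 α₁ α₂ u gx gy) :
    MemH10 α₁ α₂ (fun p => -min (u p) 0) (fun p => if u p < 0 then -gx p else 0)
      (fun p => if u p < 0 then -gy p else 0) :=
  hu.map (F := fun t => -min t 0) (G := fun t s => if t < 0 then -s else 0)
    (fun _ _ _ => by simp) fun _ => exists_negPart_mem_zeroSobolev ENNReal.ofNat_ne_top

theorem MemH10.abs (hu : MemH10 α₁ α₂ u gx gy) :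
    MemH10 α₁ α₂ (fun p => |u p|) (fun p => if 0 < u p then gx p else if u p < 0 then -gx p else 0)
      (fun p => if 0 < u p then gy p else if u p < 0 then -gy p else 0) :=
  hu.map (F := fun t => |t|) (G := fun t s => if 0 < t then s else if t < 0 then -s else 0)
    (fun _ _ _ => by simp) fun _ => exists_abs_mem_zeroSobolev ENNReal.ofNat_ne_top

theorem MemH10.ae_gradient_eq_zero (hu : MemH10 α₁ α₂ u gx gy) :
    ∀ᵐ p ∂(volume.restrict (Omega ∩ {p : ℝ × ℝ | u p = 0})), gx p = 0 ∧ gy p = 0 := by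
  obtain ⟨v, hv, h⟩ := memH10_iff_exists_represents.1 hu
  have h_snd (i : Fin 2) : ∀ᵐ p ∂volume.restrict Omega, v.1 p = 0 → v.2 i p = 0 :=
    ae_snd_eq_zero_of_mem_zeroSobolev (Ω := omegaOpens) ENNReal.ofNat_ne_top (fun _ _ => rfl)
      (continuousOn_weight i) (weight_ne_zero i) hv
  have h_zero : ∀ᵐ p ∂volume.restrict Omega, u p = 0 → gx p = 0 ∧ gy p = 0 := by
    filter_upwards [h.fst, h.sndX, h.sndY, h_snd 0, h_snd 1,
      ae_restrict_mem omegaOpens.isOpen.measurableSet] with p hu hx hy h₀ h₁ hpΩ hp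
    rw [hu, hx] at h₀
    rw [hu, hy] at h₁
    exact ⟨(mul_eq_zero.1 (h₀ hp)).resolve_left (weight_ne_zero (α₁ := α₁) (α₂ := α₂) 0 p hpΩ),
      (mul_eq_zero.1 (h₁ hp)).resolve_left (weight_ne_zero (α₁ := α₁) (α₂ := α₂) 1 p hpΩ)⟩
  have h_null : NullMeasurableSet {p | u p = 0} (volume.restrict Omega) :=
    hu.1.memL2.1.aemeasurable.nullMeasurable (measurableSet_singleton 0)
  rwa [inter_comm, ← Measure.restrict_restrict₀ h_null, ae_restrict_iff'₀ h_null]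

end UnitSquare

theorem pos_neg_abs_parts_general (α₁ α₂ : ℝ) (u gx gy : ℝ × ℝ → ℝ) (hu : MemH10 α₁ α₂ u gx gy) :
    MemH10 α₁ α₂ (fun p => max (u p) 0)
      (fun p => if 0 < u p then gx p else 0)
      (fun p => if 0 < u p then gy p else 0) ∧
    MemH10 α₁ α₂ (fun p => -min (u p) 0)
      (fun p => if u p < 0 then -gx p else 0)
      (fun p => if u p < 0 then -gy p else 0) ∧
    MemH10 α₁ α₂ (fun p => |u p|)
      (fun p => if 0 < u p then gx p else if u p < 0 then -gx p else 0)
      (fun p => if 0 < u p then gy p else if u p < 0 then -gy p else 0) ∧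
    (∀ᵐ p ∂(volume.restrict (Omega ∩ {p : ℝ × ℝ | u p = 0})), gx p = 0 ∧ gy p = 0) :=
  ⟨hu.posPart, hu.negPart, hu.abs, hu.ae_gradient_eq_zero⟩

/-- For `u ∈ 𝓗₀¹(Ω)`: the positive part `u⁺`, negative part `u⁻`
and `|u|` belong to `𝓗₀¹(Ω)`, with weak derivatives given by the indicated indicator
formulas (which encode `∂(u⁺) = ∂u` on `{u > 0}` and `0` on `{u ≤ 0}`, etc.), and the
weak gradient of `u` vanishes a.e. on `{u = 0}`. -/
theorem pos_neg_abs_parts (α₁ α₂ : ℝ)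
    (hα₁ : α₁ ∈ Ioo (0:ℝ) (1/2)) (hα₂ : α₂ ∈ Ioo (0:ℝ) (1/2))
    (u gx gy : ℝ × ℝ → ℝ) (hu : MemH10 α₁ α₂ u gx gy) :
    MemH10 α₁ α₂ (fun p => max (u p) 0)
      (fun p => if 0 < u p then gx p else 0)
      (fun p => if 0 < u p then gy p else 0) ∧
    MemH10 α₁ α₂ (fun p => -min (u p) 0)
      (fun p => if u p < 0 then -gx p else 0)
      (fun p => if u p < 0 then -gy p else 0) ∧
    MemH10 α₁ α₂ (fun p => |u p|)
      (fun p => if 0 < u p then gx p else if u p < 0 then -gx p else 0)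
      (fun p => if 0 < u p then gy p else if u p < 0 then -gy p else 0) ∧
    (∀ᵐ p ∂(volume.restrict (Omega ∩ {p : ℝ × ℝ | u p = 0})), gx p = 0 ∧ gy p = 0) :=
  pos_neg_abs_parts_general α₁ α₂ u gx gy hu
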